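/- X̄_α ∈ 𝒳 is an optimal solution of problem (3.1), i.e. X̄_α ∈ 𝒳̄_α and E_υ[X̄_α] = inf_{X̄ ∈ 𝒳̄_α} E_υ[X̄], if and only if X̄_α ∈ 𝒳̄_α and there exist nonnegative real numbers λ̄₁, λ̄₂, λ̄₃ with λ̄₁·g₁(X̄_α) = 0, λ̄₂·g₂(X̄_α) = 0, λ̄₃·g₃(X̄_α) = 0, and 0 ∈ ∂E_υ(X̄_α) + λ̄₁·∂g₁(X̄_α) + λ̄₂·∂g₂(X̄_α) + λ̄₃·∂g₃(X̄_α), i.e. there exist x₀* ∈ ∂E_υ(X̄_α), x₁* ∈ ∂g₁(X̄_α), x₂* ∈ ∂g₂(X̄_α), x₃* ∈ ∂g₃(X̄_α) with x₀* + λ̄₁x₁* + λ̄₂x₂* + λ̄₃x₃* = 0. -/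

import Mathlib

open MeasureTheory Filter Topology
open scoped ENNReal

/-- `X` belongs to the space `𝒳` of bounded measurable real-valued functions on `Ω`. -/
def MemX {Ω : Type*} [MeasurableSpace Ω] (X : Ω → ℝ) : Prop :=
  Measurable X ∧ ∃ M : ℝ, ∀ ω, |X ω| ≤ M

/-- A sublinear operator on `𝒳`: monotone, constant preserving, subadditive and
positively homogeneous. -/
def IsSublinearOp {Ω : Type*} [MeasurableSpace Ω] (ρ : (Ω → ℝ) → ℝ) : Prop :=
  (∀ X Y : Ω → ℝ, MemX X → MemX Y → (∀ ω, Y ω ≤ X ω) → ρ Y ≤ ρ X) ∧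
  (∀ c : ℝ, ρ (fun _ => c) = c) ∧
  (∀ X Y : Ω → ℝ, MemX X → MemX Y → ρ (X + Y) ≤ ρ X + ρ Y) ∧
  (∀ c : ℝ, 0 ≤ c → ∀ X : Ω → ℝ, MemX X → ρ (c • X) = c * ρ X)

/-- A linear functional on `𝒳`. -/
def IsLinearOp {Ω : Type*} [MeasurableSpace Ω] (L : (Ω → ℝ) → ℝ) : Prop :=
  (∀ X Y : Ω → ℝ, MemX X → MemX Y → L (X + Y) = L X + L Y) ∧
  (∀ (c : ℝ) (X : Ω → ℝ), MemX X → L (c • X) = c * L X)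

/-- `L` is dominated by `ρ` on `𝒳`. -/
def Dominated {Ω : Type*} [MeasurableSpace Ω] (L ρ : (Ω → ℝ) → ℝ) : Prop :=
  ∀ X : Ω → ℝ, MemX X → L X ≤ ρ X

/-- The conjugate operator `E_ῡ[X] := -E_υ[-X]`. -/
def conjOp {Ω : Type*} (ρ : (Ω → ℝ) → ℝ) : (Ω → ℝ) → ℝ := fun X => -ρ (-X)

/-- The set `𝒳_α` of test functions at significance level `α`. -/
def testSet {Ω : Type*} [MeasurableSpace Ω] (Emu : (Ω → ℝ) → ℝ) (α : ℝ) : Set (Ω → ℝ) :=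
  {X | MemX X ∧ (∀ ω, 0 ≤ X ω ∧ X ω ≤ 1) ∧ Emu X ≤ α}

/-- `Xs` is a subgradient at `X₀` of `f : 𝒳 → ℝ`: a continuous (w.r.t. the supremum
norm) linear functional on `𝒳` with `⟨X - X₀, Xs⟩ ≤ f(X) - f(X₀)` for all `X ∈ 𝒳`. -/
def IsSubgradientAt {Ω : Type*} [MeasurableSpace Ω]
    (f : (Ω → ℝ) → ℝ) (X₀ : Ω → ℝ) (Xs : (Ω → ℝ) → ℝ) : Prop :=
  IsLinearOp Xs ∧
  (∃ C : ℝ, ∀ X : Ω → ℝ, MemX X → |Xs X| ≤ C * ⨆ ω, |X ω|) ∧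
  ∀ X : Ω → ℝ, MemX X → Xs (X - X₀) ≤ f X - f X₀

/-!
By Slater's condition, the minimum `m` is the minimum of a Lagrangian: separating the origin from
the open convex set of vectors that strictly dominate some `(f x - m, g₁ x, …, gₙ x)` gives
nonnegative weights, and a strictly feasible point forces the weight of `f` to be positive. Hence
`x₀` minimizes `f + ∑ lᵢ gᵢ` over the whole space, so that the one-sided directional derivatives,
which are sublinear by convexity, satisfy `f'(x₀; d) + ∑ lᵢ gᵢ'(x₀; d) ≥ 0`, and Hahn–Banach splits
the zero functional into subgradients. No topology is needed for this: on the space of bounded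
measurable functions a subgradient of a Lipschitz function is automatically continuous.
-/

section DirectionalDerivative

lemma le_of_hasDerivWithinAt_Ioi_of_le {f g : ℝ → ℝ} {f' g' x : ℝ}
    (hf : HasDerivWithinAt f f' (Set.Ioi x) x) (hg : HasDerivWithinAt g g' (Set.Ioi x) x)
    (heq : f x = g x) (hle : ∀ t, x < t → f t ≤ g t) : f' ≤ g' := by
  rw [hasDerivWithinAt_iff_tendsto_slope' Set.self_notMem_Ioi] at hf hg
  refine le_of_tendsto_of_tendsto hf hg ?_
  filter_upwards [self_mem_nhdsWithin] with t ht
  rw [slope_def_field, slope_def_field, heq]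
  exact div_le_div_of_nonneg_right (sub_le_sub_right (hle t ht) _) (sub_pos.2 ht).le

variable {V : Type*} [AddCommGroup V] [Module ℝ V] {f : V → ℝ}

/-- The one-sided directional derivative `f'(x; d) = lim_{t ↓ 0} (f (x + t d) - f x) / t`.
It carries information only where this limit exists, as it does for convex `f`. -/
noncomputable def rightLineDeriv (f : V → ℝ) (x d : V) : ℝ :=
  derivWithin (fun t : ℝ => f (x + t • d)) (Set.Ioi 0) 0

lemma convexOn_line (hf : ConvexOn ℝ Set.univ f) (x d : V) :
    ConvexOn ℝ Set.univ fun t : ℝ => f (x + t • d) := by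
  simpa [Function.comp_def, AffineMap.lineMap_apply, add_comm] using
    hf.comp_affineMap (AffineMap.lineMap x (x + d))

lemma hasDerivWithinAt_rightLineDeriv (hf : ConvexOn ℝ Set.univ f) (x d : V) :
    HasDerivWithinAt (fun t : ℝ => f (x + t • d)) (rightLineDeriv f x d) (Set.Ioi 0) 0 :=
  (convexOn_line hf x d).hasDerivWithinAt_rightDeriv_of_mem_interior (by simp)

lemma rightLineDeriv_le_sub (hf : ConvexOn ℝ Set.univ f) (x d : V) :
    rightLineDeriv f x d ≤ f (x + d) - f x := by
  simpa [slope_def_field] using (convexOn_line hf x d).le_slope_of_hasDerivWithinAt_Ioi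
    (Set.mem_univ 0) (Set.mem_univ 1) one_pos (hasDerivWithinAt_rightLineDeriv hf x d)

lemma rightLineDeriv_smul (hf : ConvexOn ℝ Set.univ f) (x d : V) {c : ℝ} (hc : 0 ≤ c) :
    rightLineDeriv f x (c • d) = c * rightLineDeriv f x d := by
  rcases hc.eq_or_lt with rfl | hc
  · simp [rightLineDeriv]
  have hscale : HasDerivWithinAt (fun t : ℝ => t * c) c (Set.Ioi 0) 0 := by
    simpa using (hasDerivWithinAt_id (0 : ℝ) (Set.Ioi 0)).mul_const c
  have hcomp := HasDerivWithinAt.scomp_of_eq (0 : ℝ) (hasDerivWithinAt_rightLineDeriv hf x d)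
    hscale (fun t ht => mul_pos ht hc) (zero_mul c).symm
  simpa [Function.comp_def, mul_smul, rightLineDeriv] using
    hcomp.derivWithin (uniqueDiffWithinAt_Ioi 0)

lemma rightLineDeriv_add_le (hf : ConvexOn ℝ Set.univ f) (x d e : V) :
    rightLineDeriv f x (d + e) ≤ rightLineDeriv f x d + rightLineDeriv f x e := by
  have hmid := ((hasDerivWithinAt_rightLineDeriv hf x ((2 : ℝ) • d)).const_mul (1 / 2)).add
    ((hasDerivWithinAt_rightLineDeriv hf x ((2 : ℝ) • e)).const_mul (1 / 2))
  refine (le_of_hasDerivWithinAt_Ioi_of_le (hasDerivWithinAt_rightLineDeriv hf x (d + e)) hmid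
    (by simp; ring) fun t _ => ?_).trans_eq ?_
  · have hpoint : x + t • (d + e) =
        (1 / 2 : ℝ) • (x + t • (2 : ℝ) • d) + (1 / 2 : ℝ) • (x + t • (2 : ℝ) • e) := by module
    rw [hpoint]
    exact hf.2 trivial trivial (by norm_num) (by norm_num) (by norm_num)
  · rw [rightLineDeriv_smul hf x d zero_le_two, rightLineDeriv_smul hf x e zero_le_two]
    ring

lemma sum_mul_rightLineDeriv_nonneg {ι : Type*} [Fintype ι] {f : ι → V → ℝ}
    (hf : ∀ i, ConvexOn ℝ Set.univ (f i)) {l : ι → ℝ} {x : V}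
    (hmin : IsMinOn (fun y => ∑ i, l i * f i y) Set.univ x) (d : V) :
    0 ≤ ∑ i, l i * rightLineDeriv (f i) x d := by
  have hderiv := HasDerivWithinAt.fun_sum (u := Finset.univ) fun i _ =>
    (hasDerivWithinAt_rightLineDeriv (hf i) x d).const_mul (l i)
  exact le_of_hasDerivWithinAt_Ioi_of_le (hasDerivWithinAt_const 0 _ (∑ i, l i * f i x)) hderiv
    (by simp) fun t _ => hmin trivial

end DirectionalDerivative

section Subdifferential

variable {V : Type*} [AddCommGroup V] [Module ℝ V]

/-- The algebraic subdifferential of `f` at `x`: all linear functionals `L`, with no continuity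
required, such that `f x + L (y - x)` minorizes `f y`. -/
def subdifferential (f : V → ℝ) (x : V) : Set (V →ₗ[ℝ] ℝ) :=
  {L | ∀ y, L (y - x) ≤ f y - f x}

-- Hahn–Banach on `ι → V` along the scaled diagonal `x ↦ (l i • x)ᵢ`, rather than for the functions
-- `l i * q i` on the diagonal, still produces `L i ≤ q i` for the indices with `l i = 0`.
lemma exists_le_sublinear_sum_smul_eq_zero {ι : Type*} [Fintype ι] {q : ι → V → ℝ}
    (hq_smul : ∀ i x, ∀ c : ℝ, 0 ≤ c → q i (c • x) = c * q i x)
    (hq_add : ∀ i x y, q i (x + y) ≤ q i x + q i y) {l : ι → ℝ} (hl : 0 ≤ l)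
    (hnonneg : ∀ x, 0 ≤ ∑ i, l i * q i x) :
    ∃ L : ι → V →ₗ[ℝ] ℝ, (∀ i x, L i x ≤ q i x) ∧ ∑ i, l i • L i = 0 := by
  classical
  have hq_zero (i) : q i 0 = 0 := by simpa using hq_smul i 0 0 le_rfl
  let scaledDiagonal : V →ₗ[ℝ] ι → V := LinearMap.pi fun i => l i • LinearMap.id
  obtain ⟨L, hLzero, hLle⟩ := exists_extension_of_le_sublinear
    (⟨LinearMap.range scaledDiagonal, 0⟩ : (ι → V) →ₗ.[ℝ] ℝ) (fun v => ∑ i, q i (v i))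
    (fun c hc v => by simp only [Pi.smul_apply, hq_smul _ _ c hc.le, Finset.mul_sum])
    (fun v w => (Finset.sum_le_sum fun i _ => hq_add i (v i) (w i)).trans_eq
      Finset.sum_add_distrib)
    (by
      rintro ⟨_, x, rfl⟩
      simpa [scaledDiagonal, hq_smul _ _ _ (hl _)] using hnonneg x)
  refine ⟨fun i => L ∘ₗ LinearMap.single ℝ (fun _ => V) i, fun i x => ?_, ?_⟩
  · refine (hLle (Pi.single i x)).trans_eq ?_
    rw [Finset.sum_eq_single i (fun j _ hj => by simp [hj, hq_zero]) (by simp), Pi.single_eq_same]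
  · ext x
    have hvec : ∑ i, Pi.single i (l i • x) = scaledDiagonal x :=
      Finset.univ_sum_single (scaledDiagonal x)
    have hL : L (scaledDiagonal x) = 0 := hLzero ⟨scaledDiagonal x, x, rfl⟩
    rw [← hvec, map_sum] at hL
    simpa only [LinearMap.sum_apply, LinearMap.smul_apply, LinearMap.comp_apply,
      LinearMap.coe_single, ← map_smul, ← Pi.single_smul, LinearMap.zero_apply] using hL

lemma exists_mem_subdifferential_sum_smul_eq_zero {ι : Type*} [Fintype ι] {f : ι → V → ℝ}
    (hf : ∀ i, ConvexOn ℝ Set.univ (f i)) {l : ι → ℝ} (hl : 0 ≤ l) {x : V}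
    (hmin : IsMinOn (fun y => ∑ i, l i * f i y) Set.univ x) :
    ∃ L : ι → V →ₗ[ℝ] ℝ, (∀ i, L i ∈ subdifferential (f i) x) ∧ ∑ i, l i • L i = 0 := by
  obtain ⟨L, hLle, hLsum⟩ := exists_le_sublinear_sum_smul_eq_zero
    (fun i d c hc => rightLineDeriv_smul (hf i) x d hc)
    (fun i => rightLineDeriv_add_le (hf i) x) hl (sum_mul_rightLineDeriv_nonneg hf hmin)
  refine ⟨L, fun i y => (hLle i _).trans ?_, hLsum⟩
  simpa using rightLineDeriv_le_sub (hf i) x (y - x)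

end Subdifferential

section LagrangeMultipliers

lemma nonneg_and_nonneg_of_forall_add_mul {a b : ℝ} (h : ∀ t, 0 < t → 0 ≤ a + t * b) :
    0 ≤ a ∧ 0 ≤ b := by
  constructor
  · have hcont : Continuous fun t => a + t * b := by fun_prop
    have hlim : Tendsto (fun t => a + t * b) (𝓝[>] 0) (𝓝 a) :=
      tendsto_nhdsWithin_of_tendsto_nhds (hcont.tendsto' 0 a (by simp))
    exact ge_of_tendsto hlim (eventually_nhdsWithin_of_forall h)
  · by_contra! hb
    have hfar := h ((|a| + 1) / -b) (div_pos (by positivity) (neg_pos.2 hb))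
    rw [div_neg, neg_mul, div_mul_cancel₀ _ hb.ne] at hfar
    linarith [le_abs_self a]

lemma mul_eq_zero_of_sum_mul_nonneg {ι : Type*} [Fintype ι] {l r : ι → ℝ} (hl : 0 ≤ l) (hr : r ≤ 0)
    (h : 0 ≤ ∑ i, l i * r i) (i : ι) : l i * r i = 0 := by
  have hterm (j) : l j * r j ≤ 0 := mul_nonpos_of_nonneg_of_nonpos (hl j) (hr j)
  have hsum : ∑ j, l j * r j = 0 := le_antisymm (Finset.sum_nonpos fun j _ => hterm j) h
  exact (Finset.sum_eq_zero_iff_of_nonpos fun j _ => hterm j).1 hsum i (Finset.mem_univ i)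

lemma isOpen_setOf_exists_forall_lt {V ι : Type*} [Finite ι] (s : Set V) (f : ι → V → ℝ) :
    IsOpen {r : ι → ℝ | ∃ x ∈ s, ∀ i, f i x < r i} := by
  have hunion : {r : ι → ℝ | ∃ x ∈ s, ∀ i, f i x < r i} =
      ⋃ x ∈ s, Set.univ.pi fun i => Set.Ioi (f i x) := by ext; simp
  rw [hunion]
  exact isOpen_biUnion fun x _ => isOpen_set_pi Set.finite_univ fun i _ => isOpen_Ioi

variable {V ι : Type*} [AddCommGroup V] [Module ℝ V] {s : Set V}

lemma convex_setOf_exists_forall_lt {f : ι → V → ℝ} (hs : Convex ℝ s)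
    (hf : ∀ i, ConvexOn ℝ s (f i)) : Convex ℝ {r : ι → ℝ | ∃ x ∈ s, ∀ i, f i x < r i} := by
  rw [convex_iff_forall_pos]
  rintro r ⟨x, hxs, hx⟩ r' ⟨y, hys, hy⟩ a b ha hb hab
  refine ⟨a • x + b • y, hs hxs hys ha.le hb.le hab, fun i => ?_⟩
  calc f i (a • x + b • y) ≤ a * f i x + b * f i y := (hf i).2 hxs hys ha.le hb.le hab
    _ < a * r i + b * r' i :=
      add_lt_add (mul_lt_mul_of_pos_left (hx i) ha) (mul_lt_mul_of_pos_left (hy i) hb)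

variable [Fintype ι]

lemma exists_nonneg_ne_zero_sum_mul_nonneg {f : ι → V → ℝ} (hs : s.Nonempty)
    (hf : ∀ i, ConvexOn ℝ s (f i)) (h : ∀ x ∈ s, ∃ i, 0 ≤ f i x) :
    ∃ l : ι → ℝ, 0 ≤ l ∧ l ≠ 0 ∧ ∀ x ∈ s, 0 ≤ ∑ i, l i * f i x := by
  classical
  obtain ⟨x₀, hx₀⟩ := hs
  have hconv : Convex ℝ s := (hf (h x₀ hx₀).choose).1
  obtain ⟨φ, hφ⟩ := geometric_hahn_banach_point_open (convex_setOf_exists_forall_lt hconv hf)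
    (isOpen_setOf_exists_forall_lt s f) (x := 0) fun ⟨x, hxs, hx⟩ =>
      (h x hxs).elim fun i hi => (hx i).not_ge hi
  have hpos (x) (hx : x ∈ s) (r : ι → ℝ) (hr : ∀ i, f i x < r i) : 0 < φ r := by
    simpa using hφ r ⟨x, hx, hr⟩
  have hφ_sum (r : ι → ℝ) : φ r = ∑ i, φ (Pi.single i 1) * r i := by
    conv_lhs => rw [pi_eq_sum_univ' r]
    simp [mul_comm]
  let r₀ : ι → ℝ := fun i => f i x₀ + 1
  have hr₀ (i) : f i x₀ < r₀ i := lt_add_one _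
  refine ⟨fun i => φ (Pi.single i 1), fun i => ?_, fun hzero => ?_, fun x hx => ?_⟩
  · refine (nonneg_and_nonneg_of_forall_add_mul (a := φ r₀) fun t ht => ?_).2
    have hsingle : (0 : ι → ℝ) ≤ Pi.single i 1 := Pi.single_nonneg.2 zero_le_one
    rw [← smul_eq_mul, ← map_smul, ← map_add]
    exact (hpos x₀ hx₀ _ fun j =>
      (hr₀ j).trans_le (le_add_of_nonneg_right (mul_nonneg ht.le (hsingle j)))).le
  · have hφ_zero : φ r₀ = 0 := by simpa [funext_iff.1 hzero] using hφ_sum r₀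
    exact (hpos x₀ hx₀ r₀ hr₀).ne' hφ_zero
  · rw [← hφ_sum]
    refine (nonneg_and_nonneg_of_forall_add_mul (b := φ 1) fun t ht => ?_).1
    simpa using (hpos x hx ((fun i => f i x) + t • 1) fun i => by simpa using ht).le

lemma exists_lagrange_multipliers_of_slater {f : V → ℝ} {g : ι → V → ℝ}
    (hf : ConvexOn ℝ s f) (hg : ∀ i, ConvexOn ℝ s (g i)) {m : ℝ}
    (hm : ∀ x ∈ s, (∀ i, g i x ≤ 0) → m ≤ f x) (hslater : ∃ x ∈ s, ∀ i, g i x < 0) :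
    ∃ l : ι → ℝ, 0 ≤ l ∧ ∀ x ∈ s, m ≤ f x + ∑ i, l i * g i x := by
  obtain ⟨z, hzs, hz⟩ := hslater
  obtain ⟨k, hk_nonneg, hk_ne, hk⟩ := exists_nonneg_ne_zero_sum_mul_nonneg
    (f := fun o : Option ι => o.elim (fun x => f x - m) g) ⟨z, hzs⟩
    (by rintro (_ | i); exacts [hf.sub (concaveOn_const m hf.1), hg i])
    fun x hx => by
      by_contra! hneg
      have hlt : f x - m < 0 := hneg none
      linarith [hm x hx fun i => (hneg (some i)).le]
  simp only [Fintype.sum_option, Option.elim] at hk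
  have hk_none : 0 < k none := by
    refine (hk_nonneg none).lt_of_ne' fun hzero => hk_ne ?_
    have hsum : 0 ≤ ∑ i, k (some i) * g i z := by simpa [hzero] using hk z hzs
    ext (_ | i)
    · exact hzero
    · have hslack := mul_eq_zero_of_sum_mul_nonneg (fun i => hk_nonneg (some i))
        (fun i => (hz i).le) hsum i
      exact (mul_eq_zero.1 hslack).resolve_right (hz i).ne
  refine ⟨fun i => k (some i) / k none, fun i => div_nonneg (hk_nonneg _) hk_none.le,
    fun x hx => ?_⟩
  have hdiv := div_nonneg (hk x hx) hk_none.le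
  rw [add_div, mul_div_cancel_left₀ _ hk_none.ne', Finset.sum_div] at hdiv
  simp only [div_mul_eq_mul_div]
  linarith

end LagrangeMultipliers

section KKT

variable {V ι : Type*} [AddCommGroup V] [Module ℝ V] [Fintype ι]

/-- `l` is a vector of Karush–Kuhn–Tucker multipliers at `x` for minimizing `f` subject to
`g i ≤ 0`: nonnegativity, complementary slackness, and `0 ∈ ∂f(x) + ∑ i, l i • ∂(g i)(x)`. -/
def IsKKTMultiplier (f : V → ℝ) (g : ι → V → ℝ) (x : V) (l : ι → ℝ) : Prop :=
  0 ≤ l ∧ (∀ i, l i * g i x = 0) ∧ ∃ L₀ ∈ subdifferential f x, ∃ L : ι → V →ₗ[ℝ] ℝ,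
    (∀ i, L i ∈ subdifferential (g i) x) ∧ L₀ + ∑ i, l i • L i = 0

variable {f : V → ℝ} {g : ι → V → ℝ} {x : V}

lemma IsKKTMultiplier.isMinOn {l : ι → ℝ} (h : IsKKTMultiplier f g x l) :
    IsMinOn f {y | ∀ i, g i y ≤ 0} x := by
  obtain ⟨hl, hslack, L₀, hL₀, L, hL, hsum⟩ := h
  intro y hy
  have hterm (i) : l i * L i (y - x) ≤ 0 := calc
    l i * L i (y - x) ≤ l i * (g i y - g i x) := mul_le_mul_of_nonneg_left (hL i y) (hl i)
    _ = l i * g i y := by rw [mul_sub, hslack, sub_zero]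
    _ ≤ 0 := mul_nonpos_of_nonneg_of_nonpos (hl i) (hy i)
  have hstationary : L₀ (y - x) + ∑ i, l i * L i (y - x) = 0 := by
    simpa using DFunLike.congr_fun hsum (y - x)
  change f x ≤ f y
  linarith [hL₀ y, Finset.sum_nonpos fun i (_ : i ∈ Finset.univ) => hterm i]

lemma exists_isKKTMultiplier_of_isMinOn (hf : ConvexOn ℝ Set.univ f)
    (hg : ∀ i, ConvexOn ℝ Set.univ (g i)) (hslater : ∃ z, ∀ i, g i z < 0)
    (hx : ∀ i, g i x ≤ 0) (hmin : IsMinOn f {y | ∀ i, g i y ≤ 0} x) :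
    ∃ l, IsKKTMultiplier f g x l := by
  obtain ⟨l, hl, hlagrange⟩ := exists_lagrange_multipliers_of_slater hf hg
    (fun y _ hy => hmin hy) (by simpa using hslater)
  have hslack : ∀ i, l i * g i x = 0 :=
    mul_eq_zero_of_sum_mul_nonneg hl hx (by linarith [hlagrange x trivial])
  obtain ⟨L, hL, hstationary⟩ := exists_mem_subdifferential_sum_smul_eq_zero
    (f := fun o : Option ι => o.elim f g) (l := fun o => o.elim 1 l) (x := x)
    (by rintro (_ | i); exacts [hf, hg i])
    (by rintro (_ | i); exacts [zero_le_one, hl i])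
    fun y _ => by simpa [Fintype.sum_option, hslack] using hlagrange y trivial
  exact ⟨l, hl, hslack, L none, hL none, fun i => L (some i), fun i => hL (some i),
    by simpa [Fintype.sum_option] using hstationary⟩

end KKT

section BoundedMeasurable

variable {Ω : Type*} [MeasurableSpace Ω] {X Y : Ω → ℝ} {ρ f : (Ω → ℝ) → ℝ}

variable (Ω) in
/-- The space `𝒳` of bounded measurable functions, as a subspace of all functions. -/
def boundedMeasurable : Submodule ℝ (Ω → ℝ) where
  carrier := {X | MemX X}
  add_mem' := fun ⟨hX, M, hM⟩ ⟨hY, N, hN⟩ =>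
    ⟨hX.add hY, M + N, fun ω => (abs_add_le _ _).trans (add_le_add (hM ω) (hN ω))⟩
  zero_mem' := ⟨measurable_const, 0, by simp⟩
  smul_mem' := fun c X ⟨hX, M, hM⟩ => ⟨hX.const_smul c, |c| * M, fun ω => by
    simpa [abs_mul] using mul_le_mul_of_nonneg_left (hM ω) (abs_nonneg c)⟩

lemma memX_const (c : ℝ) : MemX fun _ : Ω => c :=
  ⟨measurable_const, |c|, fun _ => le_rfl⟩

lemma MemX.neg (hX : MemX X) : MemX (-X) :=
  (boundedMeasurable Ω).neg_mem hX

lemma MemX.sub (hX : MemX X) (hY : MemX Y) : MemX (X - Y) :=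
  (boundedMeasurable Ω).sub_mem hX hY

lemma MemX.bddAbove_range_abs (hX : MemX X) : BddAbove (Set.range fun ω => |X ω|) :=
  hX.2.imp fun _ hM => Set.forall_mem_range.2 hM

lemma MemX.bddAbove_range (hX : MemX X) : BddAbove (Set.range X) :=
  hX.2.imp fun _ hM => Set.forall_mem_range.2 fun ω => (le_abs_self _).trans (hM ω)

lemma MemX.bddBelow_range (hX : MemX X) : BddBelow (Set.range X) :=
  hX.2.elim fun M hM => ⟨-M, Set.forall_mem_range.2 fun ω => (abs_le.1 (hM ω)).1⟩

lemma IsSublinearOp.le_iSup_abs (hρ : IsSublinearOp ρ) (hX : MemX X) : ρ X ≤ ⨆ ω, |X ω| :=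
  calc ρ X ≤ ρ fun _ => ⨆ ω, |X ω| := hρ.1 _ _ (memX_const _) hX fun ω =>
        (le_abs_self _).trans (le_ciSup hX.bddAbove_range_abs ω)
    _ = ⨆ ω, |X ω| := hρ.2.1 _

lemma isSublinearOp_iSup [Nonempty Ω] : IsSublinearOp fun X : Ω → ℝ => ⨆ ω, X ω :=
  ⟨fun _ _ hX _ hle => ciSup_mono hX.bddAbove_range hle, fun _ => ciSup_const,
    fun _ _ hX hY => ciSup_le fun ω =>
      add_le_add (le_ciSup hX.bddAbove_range ω) (le_ciSup hY.bddAbove_range ω),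
    fun _ hc _ _ => (Real.mul_iSup_of_nonneg hc _).symm⟩

lemma neg_iInf_eq_iSup_neg {ι : Type*} (X : ι → ℝ) : -(⨅ i, X i) = ⨆ i, (-X) i := by
  simpa using Real.mul_iInf_of_nonpos (r := -1) (by norm_num) X

/-- Convex functions on `𝒳` that are Lipschitz for the supremum norm, the class to which the
objective and the constraints belong. Only one-sided differences need to be bounded, since `X` and
`Y` may be exchanged. -/
def IsConvexLipschitz (f : (Ω → ℝ) → ℝ) : Prop :=
  ConvexOn ℝ Set.univ (fun X : boundedMeasurable Ω => f X) ∧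
    ∃ C : ℝ, ∀ X Y, MemX X → MemX Y → f X - f Y ≤ C * ⨆ ω, |X ω - Y ω|

lemma IsSublinearOp.isConvexLipschitz (hρ : IsSublinearOp ρ) : IsConvexLipschitz ρ := by
  obtain ⟨-, -, hadd, hsmul⟩ := id hρ
  refine ⟨⟨convex_univ, fun X _ Y _ a b ha hb _ => ?_⟩, 1, fun X Y hX hY => ?_⟩
  · calc ρ (a • X + b • Y : boundedMeasurable Ω) ≤ ρ (a • (X : Ω → ℝ)) + ρ (b • (Y : Ω → ℝ)) :=
          hadd _ _ (a • X).2 (b • Y).2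
      _ = a • ρ X + b • ρ Y := by
          rw [hsmul a ha _ X.2, hsmul b hb _ Y.2, smul_eq_mul, smul_eq_mul]
  · calc ρ X - ρ Y = ρ (X - Y + Y) - ρ Y := by rw [sub_add_cancel]
      _ ≤ ρ (X - Y) := sub_le_iff_le_add.2 (hadd _ _ (hX.sub hY) hY)
      _ ≤ 1 * ⨆ ω, |X ω - Y ω| := by simpa using hρ.le_iSup_abs (hX.sub hY)

lemma IsConvexLipschitz.add_const (hf : IsConvexLipschitz f) (c : ℝ) :
    IsConvexLipschitz fun X => f X + c :=
  ⟨hf.1.add_const c, by simpa using hf.2⟩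

lemma IsConvexLipschitz.comp_neg (hf : IsConvexLipschitz f) :
    IsConvexLipschitz fun X => f (-X) := by
  obtain ⟨hconv, C, hC⟩ := hf
  refine ⟨by simpa [Function.comp_def] using hconv.comp_linearMap (-LinearMap.id), C,
    fun X Y hX hY => ?_⟩
  calc f (-X) - f (-Y) ≤ C * ⨆ ω, |(-X) ω - (-Y) ω| := hC _ _ hX.neg hY.neg
    _ = C * ⨆ ω, |X ω - Y ω| := by simp only [Pi.neg_apply, neg_sub_neg, abs_sub_comm]

lemma IsSubgradientAt.exists_mem_subdifferential {X₀ : boundedMeasurable Ω}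
    {Xs : (Ω → ℝ) → ℝ} (h : IsSubgradientAt f X₀ Xs) :
    ∃ L ∈ subdifferential (fun X : boundedMeasurable Ω => f X) X₀, ∀ X, L X = Xs X :=
  ⟨{ toFun := fun X => Xs X
     map_add' := fun X Y => h.1.1 _ _ X.2 Y.2
     map_smul' := fun c X => h.1.2 c _ X.2 }, fun X => h.2.2 _ X.2, fun _ => rfl⟩

-- A subgradient at `X₀` inherits the Lipschitz constant of `f`, so its continuity is automatic.
lemma IsConvexLipschitz.exists_isSubgradientAt (hf : IsConvexLipschitz f)
    {X₀ : boundedMeasurable Ω} {L : boundedMeasurable Ω →ₗ[ℝ] ℝ}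
    (hL : L ∈ subdifferential (fun X : boundedMeasurable Ω => f X) X₀) :
    ∃ Xs, IsSubgradientAt f X₀ Xs ∧ ∀ X : boundedMeasurable Ω, Xs X = L X := by
  obtain ⟨-, C, hC⟩ := hf
  let Xs : (Ω → ℝ) → ℝ := Function.extend Subtype.val L 0
  have hXs (X : boundedMeasurable Ω) : Xs X = L X := Subtype.val_injective.extend_apply ..
  have hbound (X : boundedMeasurable Ω) : L X ≤ C * ⨆ ω, |(X : Ω → ℝ) ω| := by
    simpa using (hL (X₀ + X)).trans (hC _ _ (X₀ + X).2 X₀.2)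
  refine ⟨Xs, ⟨⟨fun X Y hX hY => ?_, fun c X hX => ?_⟩, ⟨C, fun X hX => ?_⟩, fun X hX => ?_⟩, hXs⟩
  · lift X to boundedMeasurable Ω using hX
    lift Y to boundedMeasurable Ω using hY
    simp only [← Submodule.coe_add, hXs, map_add]
  · lift X to boundedMeasurable Ω using hX
    simp only [← Submodule.coe_smul, hXs, map_smul, smul_eq_mul]
  · lift X to boundedMeasurable Ω using hX
    rw [hXs, abs_le']
    exact ⟨hbound X, by simpa using hbound (-X)⟩
  · lift X to boundedMeasurable Ω using hX
    simpa only [← Submodule.coe_sub, hXs] using hL X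

lemma isMinOn_iff_exists_isSubgradientAt {ι : Type*} [Fintype ι] {g : ι → (Ω → ℝ) → ℝ}
    (hf : IsConvexLipschitz f) (hg : ∀ i, IsConvexLipschitz (g i))
    (hslater : ∃ Z, MemX Z ∧ ∀ i, g i Z < 0) {X₀ : Ω → ℝ} (hX₀ : MemX X₀)
    (hfeas : ∀ i, g i X₀ ≤ 0) :
    IsMinOn f {X | MemX X ∧ ∀ i, g i X ≤ 0} X₀ ↔
      ∃ l : ι → ℝ, 0 ≤ l ∧ (∀ i, l i * g i X₀ = 0) ∧
        ∃ (x₀ : (Ω → ℝ) → ℝ) (x : ι → (Ω → ℝ) → ℝ), IsSubgradientAt f X₀ x₀ ∧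
          (∀ i, IsSubgradientAt (g i) X₀ (x i)) ∧
          ∀ X, MemX X → x₀ X + ∑ i, l i * x i X = 0 := by
  lift X₀ to boundedMeasurable Ω using hX₀
  constructor
  · intro hmin
    obtain ⟨Z, hZ, hgZ⟩ := hslater
    obtain ⟨l, hl, hslack, L₀, hL₀, L, hL, hsum⟩ :=
      exists_isKKTMultiplier_of_isMinOn (x := X₀) hf.1 (fun i => (hg i).1) ⟨⟨Z, hZ⟩, hgZ⟩ hfeas
        fun X hX => hmin ⟨X.2, hX⟩
    obtain ⟨x₀, hx₀, hx₀L⟩ := hf.exists_isSubgradientAt hL₀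
    choose x hx hxL using fun i => (hg i).exists_isSubgradientAt (hL i)
    refine ⟨l, hl, hslack, x₀, x, hx₀, hx, fun X hX => ?_⟩
    lift X to boundedMeasurable Ω using hX
    simpa [hx₀L, hxL] using DFunLike.congr_fun hsum X
  · rintro ⟨l, hl, hslack, x₀, x, hx₀, hx, hsum⟩
    obtain ⟨L₀, hL₀, hL₀x⟩ := hx₀.exists_mem_subdifferential
    choose L hL hLx using fun i => (hx i).exists_mem_subdifferential
    have hkkt : IsKKTMultiplier (fun X : boundedMeasurable Ω => f X) (fun i X => g i X) X₀ l :=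
      ⟨hl, hslack, L₀, hL₀, L, hL, LinearMap.ext fun X => by simpa [hL₀x, hLx] using hsum X X.2⟩
    exact fun X hX => hkkt.isMinOn (a := ⟨X, hX.1⟩) hX.2

end BoundedMeasurable

section HypothesisTesting

lemma eq_sInf_image_iff_isMinOn {β γ : Type*} [ConditionallyCompleteLattice γ] {f : β → γ}
    {s : Set β} {x : β} (hx : x ∈ s) (hbdd : BddBelow (f '' s)) :
    f x = sInf (f '' s) ↔ IsMinOn f s x := by
  constructor
  · exact fun h y hy => h.trans_le (csInf_le hbdd ⟨y, hy, rfl⟩)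
  · intro h
    have hleast : IsLeast (f '' s) (f x) := ⟨⟨x, hx, rfl⟩, Set.forall_mem_image.2 h⟩
    exact hleast.csInf_eq.symm

variable {Ω : Type*}

/-- The constraint functions `g₁, g₂, g₃` of problem (3.1). -/
noncomputable def testConstraint (ρ : (Ω → ℝ) → ℝ) (α : ℝ) : Fin 3 → (Ω → ℝ) → ℝ :=
  ![fun X => 1 - α - conjOp ρ X, fun X => (⨆ ω, X ω) - 1, fun X => -(⨅ ω, X ω)]

variable [MeasurableSpace Ω] [Nonempty Ω] {ρ : (Ω → ℝ) → ℝ} {α : ℝ}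

lemma isConvexLipschitz_testConstraint (hρ : IsSublinearOp ρ) (i : Fin 3) :
    IsConvexLipschitz (testConstraint ρ α i) := by
  have hsup : IsConvexLipschitz fun X : Ω → ℝ => ⨆ ω, X ω := isSublinearOp_iSup.isConvexLipschitz
  fin_cases i
  · simpa [testConstraint, conjOp, add_comm] using
      hρ.isConvexLipschitz.comp_neg.add_const (1 - α)
  · exact hsup.add_const (-1)
  · change IsConvexLipschitz fun X => -(⨅ ω, X ω)
    simpa only [neg_iInf_eq_iSup_neg] using hsup.comp_neg

lemma forall_testConstraint_nonpos_iff {X : Ω → ℝ} (hX : MemX X) :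
    (∀ i, testConstraint ρ α i X ≤ 0) ↔ (∀ ω, 0 ≤ X ω ∧ X ω ≤ 1) ∧ 1 - α ≤ conjOp ρ X := by
  have hinf : 0 ≤ ⨅ ω, X ω ↔ ∀ ω, 0 ≤ X ω := le_ciInf_iff hX.bddBelow_range
  have hsup : ⨆ ω, X ω ≤ 1 ↔ ∀ ω, X ω ≤ 1 := ciSup_le_iff hX.bddAbove_range
  calc (∀ i, testConstraint ρ α i X ≤ 0)
      ↔ 1 - α - conjOp ρ X ≤ 0 ∧ (⨆ ω, X ω) - 1 ≤ 0 ∧ -(⨅ ω, X ω) ≤ 0 := by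
        simp [testConstraint, Fin.forall_fin_succ]
    _ ↔ (∀ ω, 0 ≤ X ω ∧ X ω ≤ 1) ∧ 1 - α ≤ conjOp ρ X := by
        rw [sub_nonpos, sub_nonpos, neg_nonpos, hsup, hinf, forall_and]
        tauto

lemma exists_testConstraint_neg (hρ : IsSublinearOp ρ) (hα0 : 0 < α) (hα1 : α < 1) :
    ∃ Z, MemX Z ∧ ∀ i, testConstraint ρ α i Z < 0 := by
  have hconj : conjOp ρ (fun _ => 1 - α / 2) = 1 - α / 2 :=
    neg_eq_iff_eq_neg.2 (hρ.2.1 (-(1 - α / 2)))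
  refine ⟨fun _ => 1 - α / 2, memX_const _, Fin.forall_fin_succ.2 ⟨?_, ?_⟩⟩
  · simp [testConstraint, hconj, hα0]
  · have hlt : α / 2 < 1 := by linarith
    simp [testConstraint, Fin.forall_fin_succ, hα0, hlt]

end HypothesisTesting

/-- Theorem 3.1 (KKT-characterization): `X̄_α` is an optimal solution of problem
(3.1) iff `X̄_α ∈ 𝒳̄_α` and there are nonnegative multipliers `λ̄₁, λ̄₂, λ̄₃` with
complementary slackness and `0 ∈ ∂E_υ(X̄_α) + λ̄₁∂g₁(X̄_α) + λ̄₂∂g₂(X̄_α) + λ̄₃∂g₃(X̄_α)`. -/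
theorem optimal_iff_KKT {Ω : Type*} [MeasurableSpace Ω] [Nonempty Ω]
    (Emu Eups : (Ω → ℝ) → ℝ)
    (hEmu : IsSublinearOp Emu) (hEups : IsSublinearOp Eups)
    (α : ℝ) (hα0 : 0 < α) (hα1 : α < 1)
    (Xbar : Ω → ℝ)
    (Xbara : Set (Ω → ℝ))
    (hXbara : Xbara =
      {X : Ω → ℝ | MemX X ∧ (∀ ω, 0 ≤ X ω ∧ X ω ≤ 1) ∧ 1 - α ≤ conjOp Emu X})
    (g₁ g₂ g₃ : (Ω → ℝ) → ℝ)
    (hg₁ : g₁ = fun X => 1 - α - conjOp Emu X)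
    (hg₂ : g₂ = fun X => (⨆ ω, X ω) - 1)
    (hg₃ : g₃ = fun X => -(⨅ ω, X ω)) :
    (Xbar ∈ Xbara ∧ Eups Xbar = sInf (Eups '' Xbara)) ↔
    (Xbar ∈ Xbara ∧ ∃ l₁ l₂ l₃ : ℝ, 0 ≤ l₁ ∧ 0 ≤ l₂ ∧ 0 ≤ l₃ ∧
      l₁ * g₁ Xbar = 0 ∧ l₂ * g₂ Xbar = 0 ∧ l₃ * g₃ Xbar = 0 ∧
      ∃ x₀ x₁ x₂ x₃ : (Ω → ℝ) → ℝ,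
        IsSubgradientAt Eups Xbar x₀ ∧ IsSubgradientAt g₁ Xbar x₁ ∧
        IsSubgradientAt g₂ Xbar x₂ ∧ IsSubgradientAt g₃ Xbar x₃ ∧
        ∀ X : Ω → ℝ, MemX X →
          x₀ X + l₁ * x₁ X + l₂ * x₂ X + l₃ * x₃ X = 0) := by
  subst hXbara
  refine and_congr_right fun hX => ?_
  have hg : ![g₁, g₂, g₃] = testConstraint Emu α := by rw [hg₁, hg₂, hg₃, testConstraint]
  have hset : {X | MemX X ∧ (∀ ω, 0 ≤ X ω ∧ X ω ≤ 1) ∧ 1 - α ≤ conjOp Emu X} =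
      {X | MemX X ∧ ∀ i, testConstraint Emu α i X ≤ 0} :=
    Set.ext fun X => and_congr_right fun hX => (forall_testConstraint_nonpos_iff hX).symm
  have hbdd : BddBelow (Eups '' {X | MemX X ∧ (∀ ω, 0 ≤ X ω ∧ X ω ≤ 1) ∧ 1 - α ≤ conjOp Emu X}) :=
    ⟨0, Set.forall_mem_image.2 fun X hX => (hEups.2.1 0).ge.trans <|
      hEups.1 X _ hX.1 (memX_const 0) fun ω => (hX.2.1 ω).1⟩
  rw [eq_sInf_image_iff_isMinOn hX hbdd, hset, isMinOn_iff_exists_isSubgradientAt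
    hEups.isConvexLipschitz (isConvexLipschitz_testConstraint hEmu)
    (exists_testConstraint_neg hEmu hα0 hα1) hX.1 ((forall_testConstraint_nonpos_iff hX.1).2 hX.2),
    ← hg]
  simp [Fin.exists_fin_succ_pi, Fin.forall_fin_succ, Fin.sum_univ_succ, Pi.le_def, add_assoc,
    and_assoc]
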